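/- arXiv:1104.0829 — 2 statements merged into one kernel-verified Lean document; each statement's English description precedes it below -/
import Mathlib

section
/- With notation as in the geodesic flow (u,v) for Christoffel symbols Γ on U' ⊆ ℝⁿ: for x ∈ U' and t ∈ J(x,0), the second derivatives of u and v with respect to the initial data at (x,0) in directions (ξ₁,η₁), (ξ₂,η₂) are u''(t,x,0)·((ξ₁,η₁),(ξ₂,η₂)) = −(t²/2)·(Γ(x)(η₁,η₂) + Γ(x)(η₂,η₁)) and v''(t,x,0)·((ξ₁,η₁),(ξ₂,η₂)) = −t·(Γ(x)(η₁,η₂) + Γ(x)(η₂,η₁)). -/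
noncomputable section

open Filter Topology Set

lemma aux_local_flow {E : Type*} [NormedAddCommGroup E] [NormedSpace ℝ E] [CompleteSpace E]
    {F : E → E} {p : E} (hF : ContDiffAt ℝ 1 F p) {W : Set E} (hW : W ∈ 𝓝 p) :
    ∃ ε > (0 : ℝ), ∀ᶠ q in 𝓝 p, ∃ α : ℝ → E, α 0 = q ∧
      ∀ t ∈ Ioo (-ε) ε, α t ∈ W ∧ HasDerivAt α (F (α t)) t := by
  obtain ⟨ε, hε, a, r, L, K, hr, h⟩ := IsPicardLindelof.of_contDiffAt_one hF
  obtain ⟨α, h1, h2⟩ := (h 0).exists_forall_mem_closedBall_eq_hasDerivWithinAt_continuousOn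
  have hr' : (0 : ℝ) < r := hr
  have hnb : Metric.closedBall p (r : ℝ) ×ˢ Icc (0 - ε) (0 + ε) ∈ 𝓝 (p, (0 : ℝ)) :=
    prod_mem_nhds (Metric.closedBall_mem_nhds p hr') (Icc_mem_nhds (by linarith) (by linarith))
  have hc : ContinuousAt α (p, 0) := h2.continuousAt hnb
  have h0 : α (p, 0) = p := (h1 p (Metric.mem_closedBall_self hr'.le)).1
  have hev : ∀ᶠ z in 𝓝 (p, (0 : ℝ)), α z ∈ W := hc (by rw [h0]; exact hW)
  rw [nhds_prod_eq, eventually_prod_iff] at hev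
  obtain ⟨P, hP, Q, hQ, hPQ⟩ := hev
  obtain ⟨δ, hδ, hQ⟩ := Metric.eventually_nhds_iff.1 hQ
  refine ⟨min δ ε, lt_min hδ hε, ?_⟩
  filter_upwards [hP, Metric.closedBall_mem_nhds p hr'] with q hq hqr
  refine ⟨fun t => α (q, t), (h1 q hqr).1, fun t ht => ⟨hPQ hq (hQ ?_), ?_⟩⟩
  · rw [Real.dist_eq, sub_zero, abs_lt]
    exact ⟨by linarith [ht.1, min_le_left δ ε], by linarith [ht.2, min_le_left δ ε]⟩
  · have ha : 0 - ε < t := by linarith [ht.1, min_le_right δ ε]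
    have hb : t < 0 + ε := by linarith [ht.2, min_le_right δ ε]
    exact ((h1 q hqr).2 t ⟨ha.le, hb.le⟩).hasDerivAt (Icc_mem_nhds ha hb)

lemma aux_line {E : Type*} [NormedAddCommGroup E] [NormedSpace ℝ E] (p z : E) (s : ℝ) :
    HasDerivAt (fun s : ℝ => p + s • z) z s := by
  simpa using ((hasDerivAt_id s).smul_const z).const_add p

lemma aux_line_tendsto {E : Type*} [NormedAddCommGroup E] [NormedSpace ℝ E] (p z : E) :
    Tendsto (fun s : ℝ => p + s • z) (𝓝 0) (𝓝 p) := by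
  have := (aux_line p z 0).continuousAt.tendsto
  simpa using this

lemma aux_first {E G : Type*} [NormedAddCommGroup E] [NormedSpace ℝ E] [NormedAddCommGroup G]
    [NormedSpace ℝ G] {f : E → G} {p : E} (hf : DifferentiableAt ℝ f p) (z : E) :
    HasDerivAt (fun s : ℝ => f (p + s • z)) (fderiv ℝ f p z) 0 := by
  have h : HasFDerivAt f (fderiv ℝ f p) (p + (0 : ℝ) • z) := by simpa using hf.hasFDerivAt
  exact h.comp_hasDerivAt 0 (aux_line p z 0)

lemma aux_ev {E G : Type*} [NormedAddCommGroup E] [NormedSpace ℝ E] [NormedAddCommGroup G]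
    [NormedSpace ℝ G] {f : E → G} {p : E} (hf : ContDiffAt ℝ 2 f p) :
    ∀ᶠ q in 𝓝 p, DifferentiableAt ℝ f q := by
  filter_upwards [(hf.of_le (by norm_num : (1 : WithTop ℕ∞) ≤ 2)).eventually (by simp)] with q hq
  exact hq.differentiableAt (by simp)

lemma aux_dd {E G : Type*} [NormedAddCommGroup E] [NormedSpace ℝ E] [NormedAddCommGroup G]
    [NormedSpace ℝ G] {f : E → G} {p : E} (hf : ContDiffAt ℝ 2 f p) :
    DifferentiableAt ℝ (fderiv ℝ f) p :=
  (hf.fderiv_right (m := 1) (by norm_num)).differentiableAt (by simp)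

lemma aux_lineDeriv {E G : Type*} [NormedAddCommGroup E] [NormedSpace ℝ E] [NormedAddCommGroup G]
    [NormedSpace ℝ G] {f : E → G} {p : E} (hf : ContDiffAt ℝ 2 f p) (z : E) :
    ∀ᶠ s in 𝓝 (0 : ℝ), HasDerivAt (fun s : ℝ => f (p + s • z)) (fderiv ℝ f (p + s • z) z) s := by
  filter_upwards [(aux_line_tendsto p z).eventually (aux_ev hf)] with s hs
  exact hs.hasFDerivAt.comp_hasDerivAt s (aux_line p z s)

lemma aux_second {E G : Type*} [NormedAddCommGroup E] [NormedSpace ℝ E] [NormedAddCommGroup G]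
    [NormedSpace ℝ G] {f : E → G} {p : E} (hf : ContDiffAt ℝ 2 f p) (z : E) (φ : ℝ → G)
    (hφ : φ =ᶠ[𝓝 0] fun s => f (p + s • z)) :
    deriv (deriv φ) 0 = fderiv ℝ (fderiv ℝ f) p z z := by
  rw [hφ.deriv.deriv_eq]
  have h1 : deriv (fun s : ℝ => f (p + s • z)) =ᶠ[𝓝 0] fun s => fderiv ℝ f (p + s • z) z := by
    filter_upwards [aux_lineDeriv hf z] with s hs using hs.deriv
  rw [h1.deriv_eq]
  exact ((aux_first (aux_dd hf) z).clm_apply (hasDerivAt_const (0 : ℝ) z)).deriv.trans (by simp)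

lemma aux_second_smul {E G : Type*} [NormedAddCommGroup E] [NormedSpace ℝ E]
    [NormedAddCommGroup G]
    [NormedSpace ℝ G] {f : E → G} {p : E} (hf : ContDiffAt ℝ 2 f p) (z : E) (φ : ℝ → G)
    (hφ : φ =ᶠ[𝓝 0] fun s => s • f (p + s • z)) :
    deriv (deriv φ) 0 = (2 : ℝ) • fderiv ℝ f p z := by
  rw [hφ.deriv.deriv_eq]
  have h1 : deriv (fun s : ℝ => s • f (p + s • z)) =ᶠ[𝓝 0]
      fun s => s • fderiv ℝ f (p + s • z) z + f (p + s • z) := by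
    filter_upwards [aux_lineDeriv hf z] with s hs
    have h := ((hasDerivAt_id s).smul hs).deriv
    simp only [one_smul, id] at h
    exact h
  rw [h1.deriv_eq]
  have h2 := (aux_first (aux_dd hf) z).clm_apply (hasDerivAt_const (0 : ℝ) z)
  have h3 := ((hasDerivAt_id (0 : ℝ)).smul h2).add
    (aux_first (hf.differentiableAt (by simp)) z)
  refine h3.deriv.trans ?_
  simp [two_smul]

lemma aux_polar {E G : Type*} [NormedAddCommGroup E] [NormedSpace ℝ E] [NormedAddCommGroup G]
    [NormedSpace ℝ G] (B : E × E →L[ℝ] E × E →L[ℝ] G) (Q : E →L[ℝ] E →L[ℝ] G) (c : ℝ)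
    (hB : ∀ a b, B a b = B b a) (h : ∀ ξ η, B (ξ, η) (ξ, η) = -((2 * c) • Q η η))
    (ξ₁ η₁ ξ₂ η₂ : E) : B (ξ₁, η₁) (ξ₂, η₂) = -(c • (Q η₁ η₂ + Q η₂ η₁)) := by
  have h1 := h ξ₁ η₁
  have h2 := h ξ₂ η₂
  have h3 := h (ξ₁ + ξ₂) (η₁ + η₂)
  have h4 : ((ξ₁ + ξ₂, η₁ + η₂) : E × E) = (ξ₁, η₁) + (ξ₂, η₂) := rfl
  rw [h4] at h3
  simp only [map_add, ContinuousLinearMap.add_apply] at h3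
  rw [h1, h2, hB (ξ₂, η₂) (ξ₁, η₁)] at h3
  have h5 : (2 : ℝ) • B (ξ₁, η₁) (ξ₂, η₂) = (2 : ℝ) • -(c • (Q η₁ η₂ + Q η₂ η₁)) := by
    simp only [mul_smul, two_smul, smul_add, neg_add] at h3 ⊢
    rw [← sub_eq_zero] at h3 ⊢
    rw [← h3]
    abel
  exact smul_right_injective G (two_ne_zero (α := ℝ)) h5

/-- For the geodesic flow `(u,v)` of smooth Christoffel symbols `Γ` on an open
`U' ⊆ ℝⁿ`: for `x ∈ U'` and `t ∈ J(x,0)`, the second derivatives with respect to the initial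
data at `(x,0)` in directions `(ξ₁,η₁)`, `(ξ₂,η₂)` are
`u''(t,x,0) = −(t²/2)·(Γ(x)(η₁,η₂) + Γ(x)(η₂,η₁))` and
`v''(t,x,0) = −t·(Γ(x)(η₁,η₂) + Γ(x)(η₂,η₁))`. -/
theorem geodesic_flow_second_derivatives
    {n : ℕ} (U' : Set (EuclideanSpace ℝ (Fin n))) (hU' : IsOpen U')
    (Γ : EuclideanSpace ℝ (Fin n) →
      EuclideanSpace ℝ (Fin n) →L[ℝ] EuclideanSpace ℝ (Fin n) →L[ℝ] EuclideanSpace ℝ (Fin n))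
    (hΓ : ContDiffOn ℝ (⊤ : ℕ∞) Γ U')
    (J : EuclideanSpace ℝ (Fin n) → EuclideanSpace ℝ (Fin n) → Set ℝ)
    (u v : ℝ → EuclideanSpace ℝ (Fin n) → EuclideanSpace ℝ (Fin n) → EuclideanSpace ℝ (Fin n))
    (hJ : ∀ x ∈ U', ∀ w : EuclideanSpace ℝ (Fin n),
      0 ∈ J x w ∧ IsOpen (J x w) ∧ (J x w).OrdConnected)
    (hinit : ∀ x ∈ U', ∀ w : EuclideanSpace ℝ (Fin n), u 0 x w = x ∧ v 0 x w = w)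
    (hsol : ∀ x ∈ U', ∀ w : EuclideanSpace ℝ (Fin n), ∀ t ∈ J x w,
      u t x w ∈ U' ∧ HasDerivAt (fun τ => u τ x w) (v t x w) t ∧
      HasDerivAt (fun τ => v τ x w) (-(Γ (u t x w) (v t x w) (v t x w))) t)
    (hmax : ∀ x ∈ U', ∀ w : EuclideanSpace ℝ (Fin n), ∀ (I : Set ℝ)
      (u₁ v₁ : ℝ → EuclideanSpace ℝ (Fin n)),
      IsOpen I → I.OrdConnected → 0 ∈ I → u₁ 0 = x → v₁ 0 = w →
      (∀ t ∈ I, u₁ t ∈ U' ∧ HasDerivAt u₁ (v₁ t) t ∧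
        HasDerivAt v₁ (-(Γ (u₁ t) (v₁ t) (v₁ t))) t) →
      I ⊆ J x w ∧ ∀ t ∈ I, u₁ t = u t x w ∧ v₁ t = v t x w)
    -- `(u,v)` is smooth on its (open) domain of definition
    (hsmooth : ContDiffOn ℝ (⊤ : ℕ∞)
      (fun p : ℝ × EuclideanSpace ℝ (Fin n) × EuclideanSpace ℝ (Fin n) =>
        (u p.1 p.2.1 p.2.2, v p.1 p.2.1 p.2.2))
      {p : ℝ × EuclideanSpace ℝ (Fin n) × EuclideanSpace ℝ (Fin n) |
        p.2.1 ∈ U' ∧ p.1 ∈ J p.2.1 p.2.2}) :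
    ∀ x ∈ U', ∀ t ∈ J x 0, ∀ ξ₁ η₁ ξ₂ η₂ : EuclideanSpace ℝ (Fin n),
      fderiv ℝ (fun q : EuclideanSpace ℝ (Fin n) × EuclideanSpace ℝ (Fin n) =>
          fderiv ℝ (fun q' : EuclideanSpace ℝ (Fin n) × EuclideanSpace ℝ (Fin n) =>
            u t q'.1 q'.2) q) (x, 0) (ξ₁, η₁) (ξ₂, η₂)
        = -((t ^ 2 / 2) • (Γ x η₁ η₂ + Γ x η₂ η₁)) ∧
      fderiv ℝ (fun q : EuclideanSpace ℝ (Fin n) × EuclideanSpace ℝ (Fin n) =>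
          fderiv ℝ (fun q' : EuclideanSpace ℝ (Fin n) × EuclideanSpace ℝ (Fin n) =>
            v t q'.1 q'.2) q) (x, 0) (ξ₁, η₁) (ξ₂, η₂)
        = -(t • (Γ x η₁ η₂ + Γ x η₂ η₁)) := by
  -- abbreviations
  set U : ℝ × EuclideanSpace ℝ (Fin n) × EuclideanSpace ℝ (Fin n) → EuclideanSpace ℝ (Fin n) :=
    fun p => u p.1 p.2.1 p.2.2 with hUdef
  set V : ℝ × EuclideanSpace ℝ (Fin n) × EuclideanSpace ℝ (Fin n) → EuclideanSpace ℝ (Fin n) :=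
    fun p => v p.1 p.2.1 p.2.2 with hVdef
  -- scaling
  have hscale : ∀ y ∈ U', ∀ w, ∀ c τ : ℝ, c * τ ∈ J y w →
      τ ∈ J y (c • w) ∧ u (c * τ) y w = u τ y (c • w) ∧ c • v (c * τ) y w = v τ y (c • w) := by
    intro y hy w c τ hτ
    obtain ⟨hJ0, hJo, hJc⟩ := hJ y hy w
    obtain ⟨h1, h2⟩ := hmax y hy (c • w) ((fun τ => c * τ) ⁻¹' J y w)
      (fun τ => u (c * τ) y w) (fun τ => c • v (c * τ) y w)
      (hJo.preimage (by fun_prop))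
      ((hJc.convex.linear_preimage (LinearMap.mulLeft ℝ c)).ordConnected)
      (by simpa using hJ0) (by simpa using (hinit y hy w).1)
      (by simp [(hinit y hy w).2]) (by
        intro s hs
        obtain ⟨ha, hb, hd⟩ := hsol y hy w (c * s) hs
        have hl : HasDerivAt (fun τ : ℝ => c * τ) c s := by
          simpa using (hasDerivAt_id s).const_mul c
        refine ⟨ha, HasDerivAt.scomp s hb hl, ?_⟩
        have := (HasDerivAt.scomp s hd hl).const_smul c
        exact this.congr_deriv (by simp))
    exact ⟨h1 hτ, h2 τ hτ⟩
  -- local existence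
  have hloc : ∀ y ∈ U', ∀ w, ∃ ε > (0 : ℝ), ∀ᶠ q in 𝓝 (y, w), q.1 ∈ U' ∧
      ∀ t ∈ Ioo (-ε) ε, t ∈ J q.1 q.2 := by
    intro y hy w
    have hΓy : ContDiffAt ℝ 1 Γ y := (hΓ.contDiffAt (hU'.mem_nhds hy)).of_le (by exact_mod_cast le_top)
    have hF : ContDiffAt ℝ 1 (fun q : EuclideanSpace ℝ (Fin n) × EuclideanSpace ℝ (Fin n) =>
        (q.2, -(Γ q.1 q.2 q.2))) (y, w) := by
      have hg : ContDiffAt ℝ 1 (fun q : EuclideanSpace ℝ (Fin n) × EuclideanSpace ℝ (Fin n) =>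
        Γ q.1) (y, w) := ContDiffAt.comp (y, w) hΓy contDiffAt_fst
      exact contDiffAt_snd.prodMk ((hg.clm_apply contDiffAt_snd).clm_apply contDiffAt_snd).neg
    have hW : {q : EuclideanSpace ℝ (Fin n) × EuclideanSpace ℝ (Fin n) | q.1 ∈ U'} ∈ 𝓝 (y, w) :=
      (hU'.preimage continuous_fst).mem_nhds hy
    obtain ⟨ε, hε, hev⟩ := aux_local_flow hF hW
    refine ⟨ε, hε, ?_⟩
    filter_upwards [hev, hW] with q ⟨α, hα0, hα⟩ hq
    refine ⟨hq, ?_⟩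
    refine (hmax q.1 hq q.2 (Ioo (-ε) ε) (fun t => (α t).1) (fun t => (α t).2) isOpen_Ioo
      ordConnected_Ioo (by simp [hε]) (by simp [hα0]) (by simp [hα0]) ?_).1
    intro t ht
    obtain ⟨ha, hb⟩ := hα t ht
    exact ⟨ha, hb.hasFDerivAt.fst.hasDerivAt.congr_deriv (by simp),
      hb.hasFDerivAt.snd.hasDerivAt.congr_deriv (by simp)⟩
  set D : Set (ℝ × EuclideanSpace ℝ (Fin n) × EuclideanSpace ℝ (Fin n)) :=
    {p | p.2.1 ∈ U' ∧ p.1 ∈ J p.2.1 p.2.2} with hD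
  have hUV : ∀ p, D ∈ 𝓝 p → ContDiffAt ℝ 2 U p ∧ ContDiffAt ℝ 2 V p := by
    intro p hp
    have := (hsmooth.contDiffAt hp).of_le (m := 2) (WithTop.coe_le_coe.2 (le_top : (2 : ℕ∞) ≤ ⊤))
    exact ⟨this.fst, this.snd⟩
  have hD0 : ∀ y ∈ U', ∀ w, D ∈ 𝓝 ((0 : ℝ), y, w) := by
    intro y hy w
    obtain ⟨ε, hε, hev⟩ := hloc y hy w
    have := prod_mem_nhds (Ioo_mem_nhds (neg_lt_zero.2 hε) hε) hev
    filter_upwards [this] with p hp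
    exact ⟨hp.2.1, hp.2.2 _ hp.1⟩
  have hDt : ∀ y ∈ U', ∀ t : ℝ, D ∈ 𝓝 (t, y, (0 : EuclideanSpace ℝ (Fin n))) := by
    intro y hy t
    obtain ⟨ε, hε, hev⟩ := hloc y hy 0
    obtain ⟨c, hc, hct⟩ : ∃ c : ℝ, 0 < c ∧ c * |t| < ε :=
      ⟨ε / (|t| + 1), by positivity, by
        rw [div_mul_eq_mul_div, div_lt_iff₀ (by positivity)]; nlinarith⟩
    have h1 : Tendsto (fun p : ℝ × EuclideanSpace ℝ (Fin n) × EuclideanSpace ℝ (Fin n) =>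
        (p.2.1, c⁻¹ • p.2.2)) (𝓝 (t, y, 0)) (𝓝 (y, 0)) := by
      have : Continuous (fun p : ℝ × EuclideanSpace ℝ (Fin n) × EuclideanSpace ℝ (Fin n) =>
        (p.2.1, c⁻¹ • p.2.2)) := by fun_prop
      simpa using this.tendsto (t, y, 0)
    have h2 : ∀ᶠ p : ℝ × EuclideanSpace ℝ (Fin n) × EuclideanSpace ℝ (Fin n) in 𝓝 (t, y, 0),
        c * |p.1| < ε := by
      have : Continuous (fun p : ℝ × EuclideanSpace ℝ (Fin n) × EuclideanSpace ℝ (Fin n) =>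
        c * |p.1|) := by fun_prop
      exact this.continuousAt.eventually_lt continuousAt_const hct
    filter_upwards [h1.eventually hev, h2] with p hp hp2
    refine ⟨hp.1, ?_⟩
    have h3 : c * p.1 ∈ J p.2.1 (c⁻¹ • p.2.2) := hp.2 _ (by
      rw [mem_Ioo, ← abs_lt, abs_mul, abs_of_pos hc]; exact hp2)
    have := (hscale _ hp.1 _ _ _ h3).1
    rwa [smul_inv_smul₀ hc.ne'] at this
  intro x hx t _ ξ₁ η₁ ξ₂ η₂
  obtain ⟨hUt, hVt⟩ := hUV _ (hDt x hx t)
  have hut : ContDiffAt ℝ 2 (fun q : EuclideanSpace ℝ (Fin n) × EuclideanSpace ℝ (Fin n) =>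
      u t q.1 q.2) (x, 0) :=
    ContDiffAt.comp (x, 0) (g := U) hUt (contDiffAt_const.prodMk contDiffAt_id)
  have hvt : ContDiffAt ℝ 2 (fun q : EuclideanSpace ℝ (Fin n) × EuclideanSpace ℝ (Fin n) =>
      v t q.1 q.2) (x, 0) :=
    ContDiffAt.comp (x, 0) (g := V) hVt (contDiffAt_const.prodMk contDiffAt_id)
  -- derivative of `V` at time zero
  have hV1 : ∀ ξ η, ∀ r : ℝ, fderiv ℝ V (0, x, η) (r, ξ, 0) = -(r • Γ x η η) := by
    intro ξ η r
    have hVd : DifferentiableAt ℝ V (0, x, η) := (hUV _ (hD0 x hx η)).2.differentiableAt (by simp)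
    have e : ((r, ξ, 0) : ℝ × EuclideanSpace ℝ (Fin n) × EuclideanSpace ℝ (Fin n))
        = r • (1, 0, 0) + (0, ξ, 0) := by simp
    have ha : fderiv ℝ V (0, x, η) (1, 0, 0) = -(Γ x η η) := by
      have h1 := aux_first hVd (1, 0, 0)
      have h2 := (hsol x hx η 0 (hJ x hx η).1).2.2
      rw [(hinit x hx η).1, (hinit x hx η).2] at h2
      refine h1.unique ?_
      simpa [hVdef] using h2
    have hb : fderiv ℝ V (0, x, η) (0, ξ, 0) = 0 := by
      refine (aux_first hVd (0, ξ, 0)).unique ?_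
      refine (hasDerivAt_const (0 : ℝ) η).congr_of_eventuallyEq ?_
      filter_upwards [(aux_line_tendsto x ξ).eventually (hU'.mem_nhds hx)] with s hs
      simpa [hVdef] using (hinit _ hs η).2
    rw [e, map_add, map_smul, ha, hb]
    simp
  -- second derivative of `U` at time zero
  have hU2 : ∀ ξ η, ∀ r : ℝ, fderiv ℝ (fderiv ℝ U) (0, x, η) (r, ξ, 0) (r, ξ, 0)
      = -(r ^ 2 • Γ x η η) := by
    intro ξ η r
    have hUc : ContDiffAt ℝ 2 U (0, x, η) := (hUV _ (hD0 x hx η)).1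
    have hsym := hUc.isSymmSndFDerivAt (by simp)
    have e : ((r, ξ, 0) : ℝ × EuclideanSpace ℝ (Fin n) × EuclideanSpace ℝ (Fin n))
        = r • (1, 0, 0) + (0, ξ, 0) := by simp
    have ha : ∀ a, fderiv ℝ (fderiv ℝ U) (0, x, η) a (1, 0, 0) = fderiv ℝ V (0, x, η) a := by
      intro a
      have h1 : (fun p => fderiv ℝ U p (1, 0, 0)) =ᶠ[𝓝 (0, x, η)] V := by
        filter_upwards [aux_ev hUc, hD0 x hx η] with p hp hpD
        refine (aux_first hp (1, 0, 0)).unique ?_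
        have h2 := (hsol p.2.1 hpD.1 p.2.2 p.1 hpD.2).2.1
        have h3 := HasDerivAt.comp_const_add p.1 0 (by simpa using h2)
        simpa [hUdef, hVdef] using h3
      rw [← h1.fderiv_eq, fderiv_clm_apply (aux_dd hUc) (differentiableAt_const _)]
      simp
    have hb : fderiv ℝ (fderiv ℝ U) (0, x, η) (0, ξ, 0) (0, ξ, 0) = 0 := by
      rw [← aux_second hUc (0, ξ, 0) (fun s => x + s • ξ)]
      · have : deriv (fun s : ℝ => x + s • ξ) = fun _ => ξ := by
          funext s
          exact (aux_line x ξ s).deriv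
        rw [this]; simp
      · filter_upwards [(aux_line_tendsto x ξ).eventually (hU'.mem_nhds hx)] with s hs
        simpa [hUdef] using (hinit _ hs η).1.symm
    have hc := hV1 ξ η 0
    have hd := hV1 0 η 1
    have hs := hsym (1, 0, 0) (0, ξ, 0)
    rw [e]
    simp only [map_add, map_smul, ContinuousLinearMap.add_apply, ContinuousLinearMap.smul_apply]
    rw [hs, ha, ha, hb, hc, hd]
    simp [smul_smul, pow_two]
  have hD1 : ∀ ξ η, ∀ᶠ s : ℝ in 𝓝 0, x + s • ξ ∈ U' ∧ s * t ∈ J (x + s • ξ) η := by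
    intro ξ η
    filter_upwards [(aux_line_tendsto ((0 : ℝ), x, η) (t, ξ, 0)).eventually (hD0 x hx η)] with s hs
    simpa [hD] using hs
  constructor
  · refine aux_polar _ (Γ x) (t ^ 2 / 2) (hut.isSymmSndFDerivAt (by simp)) ?_ ξ₁ η₁ ξ₂ η₂
    intro ξ η
    rw [← aux_second hut (ξ, η) _ (EventuallyEq.rfl),
      aux_second (hUV _ (hD0 x hx η)).1 (t, ξ, 0), hU2]
    · congr 2; ring
    · filter_upwards [hD1 ξ η] with s hs
      simpa [hUdef] using (hscale _ hs.1 η s t hs.2).2.1.symm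
  · refine aux_polar _ (Γ x) t (hvt.isSymmSndFDerivAt (by simp)) ?_ ξ₁ η₁ ξ₂ η₂
    intro ξ η
    rw [← aux_second hvt (ξ, η) _ (EventuallyEq.rfl),
      aux_second_smul (hUV _ (hD0 x hx η)).2 (t, ξ, 0), hV1]
    · simp [smul_smul]
    · filter_upwards [hD1 ξ η] with s hs
      simpa [hVdef] using (hscale _ hs.1 η s t hs.2).2.2.symm
end
end

section
/- Let Ω ⊆ ℝⁿ be open, f ∈ C^∞(Ω × Ω), and suppose that for every compactly supported distribution T ∈ E'(Ω) the generalized function (φ, x) ↦ ⟨T, f(x,·)·φ(·−x)⟩ is negligible in the diffeomorphism-invariant Colombeau algebra G^d(Ω). Then all first-order partial derivatives of f in the second slot vanish on the diagonal: ∂_i(y ↦ f(x,y))|_{y=x} = 0 for all x ∈ Ω and i = 1,…,n. -/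
open MeasureTheory

noncomputable section

theorem exists_weights (N : ℕ) (b : Fin N → ℝ) :
    ∃ c : Fin N → ℝ, ∀ p : Fin N, ∑ j, c j * ((j : ℝ) + 1) ^ (p : ℕ) = b p := by
  let V : Matrix (Fin N) (Fin N) ℝ := Matrix.vandermonde (fun j : Fin N => (j : ℝ) + 1)
  have hV : IsUnit V.det := by
    rw [isUnit_iff_ne_zero]
    refine Matrix.det_vandermonde_ne_zero_iff.2 ?_
    intro i j h
    have h' : (i : ℝ) + 1 = (j : ℝ) + 1 := h
    have h2 : (i : ℝ) = (j : ℝ) := by linarith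
    exact Fin.ext (by exact_mod_cast h2)
  refine ⟨Matrix.vecMul b V⁻¹, fun p => ?_⟩
  have h : Matrix.vecMul (Matrix.vecMul b V⁻¹) V = b := by
    rw [Matrix.vecMul_vecMul, Matrix.nonsing_inv_mul V hV, Matrix.vecMul_one]
  have h2 := congrFun h p
  simpa [Matrix.vecMul, dotProduct, V, Matrix.vandermonde_apply] using h2

theorem moment_scale {n : ℕ} (η : EuclideanSpace ℝ (Fin n) → ℝ) (α : Fin n → ℕ) (l : ℝ)
    (hl : 0 < l) :
    (∫ x : EuclideanSpace ℝ (Fin n), (∏ i, x i ^ α i) * η (l⁻¹ • x)) =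
      l ^ (n + ∑ i, α i) * ∫ x : EuclideanSpace ℝ (Fin n), (∏ i, x i ^ α i) * η x := by
  have h := Measure.integral_comp_smul (volume : Measure (EuclideanSpace ℝ (Fin n)))
    (fun z => (∏ i, (l * z i) ^ α i) * η z) l⁻¹
  have e1 : ∀ x : EuclideanSpace ℝ (Fin n),
      (∏ i, (l * (l⁻¹ • x) i) ^ α i) = ∏ i, x i ^ α i := by
    intro x
    refine Finset.prod_congr rfl fun i _ => ?_
    simp [hl.ne']
  have e2 : ∀ x : EuclideanSpace ℝ (Fin n),
      (∏ i, (l * x i) ^ α i) * η x = l ^ (∑ i, α i) * ((∏ i, x i ^ α i) * η x) := by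
    intro x
    simp only [mul_pow, Finset.prod_mul_distrib, Finset.prod_pow_eq_pow_sum]
    ring
  simp only [e1, e2] at h
  rw [h, integral_const_mul]
  have e3 : |((l⁻¹ ^ Module.finrank ℝ (EuclideanSpace ℝ (Fin n)))⁻¹ : ℝ)| = l ^ n := by
    rw [finrank_euclideanSpace_fin, inv_pow, inv_inv, abs_of_pos (by positivity)]
  rw [e3, smul_eq_mul, pow_add]
  ring

theorem exists_mollifier (n q : ℕ) (hn : 0 < n) :
    ∃ φ : EuclideanSpace ℝ (Fin n) → ℝ, ContDiff ℝ (⊤ : ℕ∞) φ ∧ HasCompactSupport φ ∧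
      (∫ x, φ x) = 1 ∧
      (∀ α : Fin n → ℕ, 1 ≤ ∑ i, α i → ∑ i, α i ≤ q →
            (∫ x, (∏ i, x i ^ α i) * φ x) = 0) ∧
      ∀ᶠ z in nhds 0, φ z = 1 := by
  let η : ContDiffBump (0 : EuclideanSpace ℝ (Fin n)) := ⟨1, 2, by norm_num, by norm_num⟩
  have hM : 0 < ∫ x, η x := η.integral_pos
  obtain ⟨c, hc⟩ := exists_weights (n + q + 1)
    (fun p => if (p : ℕ) = 0 then 1 else if (p : ℕ) = n then (∫ x, η x)⁻¹ else 0)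
  have hcs : ∀ j : Fin (n + q + 1), HasCompactSupport
      (fun x : EuclideanSpace ℝ (Fin n) => η (((j : ℝ) + 1)⁻¹ • x)) := fun j =>
    η.hasCompactSupport.comp_smul (by positivity)
  have hsm : ∀ j : Fin (n + q + 1), ContDiff ℝ (⊤ : ℕ∞)
      (fun x : EuclideanSpace ℝ (Fin n) => η (((j : ℝ) + 1)⁻¹ • x)) := fun j =>
    η.contDiff.comp (contDiff_const_smul _)
  have hmom : ∀ α : Fin n → ℕ, (∫ x : EuclideanSpace ℝ (Fin n),
      (∏ i, x i ^ α i) * ∑ j : Fin (n + q + 1), c j * η (((j : ℝ) + 1)⁻¹ • x)) =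
      (∑ j : Fin (n + q + 1), c j * ((j : ℝ) + 1) ^ (n + ∑ i, α i)) *
        ∫ x : EuclideanSpace ℝ (Fin n), (∏ i, x i ^ α i) * η x := by
    intro α
    simp only [Finset.mul_sum]
    rw [integral_finsetSum]
    · rw [Finset.sum_mul]
      refine Finset.sum_congr rfl fun j _ => ?_
      have := moment_scale (fun x => η x) α ((j : ℝ) + 1) (by positivity)
      rw [mul_assoc, ← this, ← integral_const_mul]
      congr 1
      ext x
      ring
    · intro j _
      refine Continuous.integrable_of_hasCompactSupport ?_ ?_
      · have h1 : Continuous fun x : EuclideanSpace ℝ (Fin n) => ∏ i, x i ^ α i := by fun_prop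
        exact h1.mul (continuous_const.mul (hsm j).continuous)
      · exact ((hcs j).mul_left (f := fun _ => c j)).mul_left
  refine ⟨fun x => ∑ j : Fin (n + q + 1), c j * η (((j : ℝ) + 1)⁻¹ • x), ?_, ?_, ?_, ?_, ?_⟩
  · exact ContDiff.sum fun j _ => contDiff_const.mul (hsm j)
  · refine HasCompactSupport.of_support_subset_isCompact
      (K := ⋃ j : Fin (n + q + 1), tsupport
        (fun x : EuclideanSpace ℝ (Fin n) => η (((j : ℝ) + 1)⁻¹ • x)))
      (isCompact_iUnion fun j => hcs j) ?_
    intro x hx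
    obtain ⟨j, _, hj⟩ := Finset.exists_ne_zero_of_sum_ne_zero hx
    exact Set.mem_iUnion.2 ⟨j, subset_tsupport _ (right_ne_zero_of_mul hj)⟩
  · have h := hmom 0
    have h1 := hc ⟨n, by omega⟩
    simp only [hn.ne', if_false, if_true] at h1
    simp only [Pi.zero_apply, pow_zero, Finset.prod_const_one, one_mul, Finset.sum_const_zero,
      add_zero] at h
    rw [h, h1, inv_mul_cancel₀ hM.ne']
  · intro α h1 h2
    have h3 := hc ⟨n + ∑ i, α i, by omega⟩
    have a1 : n + ∑ i, α i ≠ 0 := by omega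
    have a2 : n + ∑ i, α i ≠ n := by omega
    simp only [a1, a2, if_false] at h3
    rw [hmom α, h3, zero_mul]
  · have h0 := hc ⟨0, by omega⟩
    simp only [if_true, pow_zero, mul_one] at h0
    have : ∀ j : Fin (n + q + 1), ∀ᶠ z : EuclideanSpace ℝ (Fin n) in nhds 0,
        η (((j : ℝ) + 1)⁻¹ • z) = 1 := by
      intro j
      have ht : Filter.Tendsto (fun z : EuclideanSpace ℝ (Fin n) => ((j : ℝ) + 1)⁻¹ • z)
          (nhds 0) (nhds 0) := by
        have : Continuous (fun z : EuclideanSpace ℝ (Fin n) => ((j : ℝ) + 1)⁻¹ • z) := by fun_prop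
        simpa using this.tendsto 0
      exact ht.eventually η.eventuallyEq_one
    filter_upwards [Filter.eventually_all.2 this] with z hz
    simp only [hz, mul_one, h0]

theorem exists_deriv_functional {E : Type*} [NormedAddCommGroup E] [NormedSpace ℝ E] (x v : E) :
    ∃ T : (E → ℝ) →ₗ[ℝ] ℝ, ∀ g : E → ℝ, DifferentiableAt ℝ g x → T g = fderiv ℝ g x v := by
  let p : Submodule ℝ (E → ℝ) :=
    { carrier := {g | DifferentiableAt ℝ g x}
      add_mem' := fun ha hb => DifferentiableAt.add ha hb
      zero_mem' := differentiableAt_const 0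
      smul_mem' := fun c _ hg => DifferentiableAt.const_smul hg c }
  let L : p →ₗ[ℝ] ℝ :=
    { toFun := fun g => fderiv ℝ (g : E → ℝ) x v
      map_add' := fun a b => by
        have := fderiv_add a.2 b.2
        simp [this]
      map_smul' := fun c a => by
        have := fderiv_const_smul a.2 c
        simp [this] }
  obtain ⟨T, hT⟩ := L.exists_extend
  exact ⟨T, fun g hg => congrArg (fun S => S ⟨g, hg⟩) hT⟩

/-- Let `Ω ⊆ ℝⁿ` be open and `f ∈ C^∞(Ω × Ω)`.  Suppose that for every
compactly supported distribution `T ∈ E'(Ω)` (here: a linear functional on functions dominated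
by finitely many `C^k`-seminorms on a compact subset of `Ω`) the generalized function
`(φ, x) ↦ ⟨T, f(x,·)·(S_ε φ)(·−x)⟩` is negligible: for every compact `K ⊆ Ω` and every `m`
there is `q` such that for every test function `φ` with unit integral and vanishing moments of
orders `1,…,q`, `sup_{x∈K} |⟨T, f(x,·)(S_ε φ)(·−x)⟩| = O(ε^m)`.  Then all first-order partial
derivatives of `f` in the second slot vanish on the diagonal. -/
theorem negligibility_forces_diagonal_derivatives_zero
    {n : ℕ} (hn : 0 < n) (Ω : Set (EuclideanSpace ℝ (Fin n))) (hΩ : IsOpen Ω)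
    (f : EuclideanSpace ℝ (Fin n) × EuclideanSpace ℝ (Fin n) → ℝ)
    (hf : ContDiffOn ℝ (⊤ : ℕ∞) f (Ω ×ˢ Ω))
    (H : ∀ T : (EuclideanSpace ℝ (Fin n) → ℝ) →ₗ[ℝ] ℝ,
      (∃ K' : Set (EuclideanSpace ℝ (Fin n)), IsCompact K' ∧ K' ⊆ Ω ∧
        ∃ C : ℝ, 0 ≤ C ∧ ∃ k : ℕ,
          ∀ g : EuclideanSpace ℝ (Fin n) → ℝ, ContDiff ℝ (⊤ : ℕ∞) g →
            |T g| ≤ C * ∑ i ∈ Finset.range (k + 1),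
              ⨆ x : K', ‖iteratedFDeriv ℝ i g (x : EuclideanSpace ℝ (Fin n))‖) →
      ∀ K : Set (EuclideanSpace ℝ (Fin n)), IsCompact K → K ⊆ Ω → ∀ m : ℕ, ∃ q : ℕ,
        ∀ φ : EuclideanSpace ℝ (Fin n) → ℝ, ContDiff ℝ (⊤ : ℕ∞) φ → HasCompactSupport φ →
          (∫ x, φ x) = 1 →
          (∀ α : Fin n → ℕ, 1 ≤ ∑ i, α i → ∑ i, α i ≤ q →
            (∫ x, (∏ i, x i ^ α i) * φ x) = 0) →
          ∃ C' > (0 : ℝ), ∃ ε₀ > (0 : ℝ), ∀ ε ∈ Set.Ioc (0 : ℝ) ε₀, ∀ x ∈ K,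
            |T (fun y => f (x, y) * (ε ^ n)⁻¹ * φ (ε⁻¹ • (y - x)))| ≤ C' * ε ^ m) :
    ∀ x ∈ Ω, ∀ i : Fin n,
      fderiv ℝ (fun y => f (x, y)) x (EuclideanSpace.single i 1) = 0 := by
  intro x hx k
  obtain ⟨T, hT⟩ := exists_deriv_functional x (EuclideanSpace.single k (1 : ℝ))
  have hψ : DifferentiableAt ℝ (fun y => f (x, y)) x := by
    have h1 : DifferentiableAt ℝ f (x, x) :=
      (hf.contDiffAt ((hΩ.prod hΩ).mem_nhds ⟨hx, hx⟩)).differentiableAt (by simp)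
    exact DifferentiableAt.comp x h1 (by fun_prop)
  obtain ⟨q, hq⟩ := H T ⟨{x}, isCompact_singleton, by simpa using hx, 1, zero_le_one, 1, by
    intro g hg
    rw [hT g (hg.differentiable (by simp) x), Finset.sum_range_succ, Finset.sum_range_one,
      one_mul]
    have e : ∀ i : ℕ, (⨆ y : ({x} : Set (EuclideanSpace ℝ (Fin n))),
        ‖iteratedFDeriv ℝ i g (y : EuclideanSpace ℝ (Fin n))‖) = ‖iteratedFDeriv ℝ i g x‖ := by
      intro i
      rw [ciSup_unique]
      rfl
    rw [e, e, norm_iteratedFDeriv_one]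
    have h1 := (fderiv ℝ g x).le_opNorm (EuclideanSpace.single k (1 : ℝ))
    have h2 : ‖(EuclideanSpace.single k (1 : ℝ) : EuclideanSpace ℝ (Fin n))‖ = 1 := by simp
    rw [h2, mul_one, Real.norm_eq_abs] at h1
    have := norm_nonneg (iteratedFDeriv ℝ 0 g x)
    linarith⟩ {x} isCompact_singleton (by simpa using hx) 1
  obtain ⟨φ, h1, h2, h3, h4, h5⟩ := exists_mollifier n q hn
  obtain ⟨C, hC, ε₀, hε₀, hb⟩ := hq φ h1 h2 h3 h4
  have key : ∀ ε ∈ Set.Ioc (0 : ℝ) ε₀,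
      |fderiv ℝ (fun y => f (x, y)) x (EuclideanSpace.single k 1)| ≤ C * ε ^ 1 * ε ^ n := by
    intro ε hε
    have hb' := hb ε hε x rfl
    have ht : Filter.Tendsto (fun y : EuclideanSpace ℝ (Fin n) => ε⁻¹ • (y - x))
        (nhds x) (nhds 0) := by
      have : Continuous (fun y : EuclideanSpace ℝ (Fin n) => ε⁻¹ • (y - x)) := by fun_prop
      simpa using this.tendsto x
    have hev : (fun y => f (x, y) * (ε ^ n)⁻¹ * φ (ε⁻¹ • (y - x))) =ᶠ[nhds x]
        fun y => f (x, y) * (ε ^ n)⁻¹ := by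
      filter_upwards [ht.eventually h5] with y hy
      rw [hy, mul_one]
    have hd : DifferentiableAt ℝ (fun y => f (x, y) * (ε ^ n)⁻¹) x := hψ.mul_const _
    have hpos : 0 < ε ^ n := pow_pos hε.1 n
    rw [hT _ (hd.congr_of_eventuallyEq hev), hev.fderiv_eq, fderiv_mul_const hψ] at hb'
    rw [ContinuousLinearMap.smul_apply, smul_eq_mul, abs_mul, abs_of_pos (inv_pos.2 hpos),
      inv_mul_le_iff₀ hpos] at hb'
    linarith
  have hlim : Filter.Tendsto (fun ε : ℝ => C * ε ^ 1 * ε ^ n) (nhdsWithin 0 (Set.Ioi 0))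
      (nhds 0) := by
    have : Continuous (fun ε : ℝ => C * ε ^ 1 * ε ^ n) := by fun_prop
    have h := this.tendsto 0
    simp only [pow_one, mul_zero, zero_mul] at h
    simpa using h.mono_left nhdsWithin_le_nhds
  have hle := ge_of_tendsto hlim (Filter.eventually_of_mem (Ioc_mem_nhdsGT hε₀) key)
  exact abs_nonpos_iff.1 hle
end
end
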